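/- Squashed entanglement is upper semicontinuous on the set of states: for every state ρ^{AB} on H_A ⊗ H_B and every c > E_sq(ρ^{AB}), there is a neighbourhood (in trace norm) of ρ^{AB} in the set of states on H_A ⊗ H_B on which E_sq < c. -/

import Mathlib

open Matrix BigOperators Kronecker
open scoped Classical ComplexOrder

noncomputable section

/-- A (quantum) state: positive semidefinite matrix of trace 1. -/
def IsState {n : Type*} [Fintype n] (ρ : Matrix n n ℂ) : Prop :=
  ρ.PosSemidef ∧ ρ.trace = 1

/-- Von Neumann entropy (base 2), via the eigenvalues of a Hermitian matrix. -/
def vonNeumannEntropy {n : Type*} [Fintype n] (ρ : Matrix n n ℂ) : ℝ :=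
  if h : ρ.IsHermitian then ∑ i, -(h.eigenvalues i * Real.logb 2 (h.eigenvalues i)) else 0

/-- Partial trace over the second (right) factor. -/
def ptraceR {A B : Type*} [Fintype A] [Fintype B]
    (ρ : Matrix (A × B) (A × B) ℂ) : Matrix A A ℂ :=
  fun i j => ∑ b, ρ (i, b) (j, b)

/-- Partial trace over the first (left) factor. -/
def ptraceL {A B : Type*} [Fintype A] [Fintype B]
    (ρ : Matrix (A × B) (A × B) ℂ) : Matrix B B ℂ :=
  fun i j => ∑ a, ρ (a, i) (a, j)

variable {A B E : Type*} [Fintype A] [Fintype B] [Fintype E]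

/-- Marginal of a tripartite state on `A × E` (trace out `B`). -/
def margAE (ρ : Matrix (A × B × E) (A × B × E) ℂ) : Matrix (A × E) (A × E) ℂ :=
  fun x y => ∑ b, ρ (x.1, b, x.2) (y.1, b, y.2)

/-- Marginal of a tripartite state on `B × E` (trace out `A`). -/
def margBE (ρ : Matrix (A × B × E) (A × B × E) ℂ) : Matrix (B × E) (B × E) ℂ :=
  fun x y => ∑ a, ρ (a, x.1, x.2) (a, y.1, y.2)

/-- Marginal of a tripartite state on `E` (trace out `A` and `B`). -/
def margE (ρ : Matrix (A × B × E) (A × B × E) ℂ) : Matrix E E ℂ :=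
  fun x y => ∑ a, ∑ b, ρ (a, b, x) (a, b, y)

/-- Marginal of a tripartite state on `A × B` (trace out `E`). -/
def margAB (ρ : Matrix (A × B × E) (A × B × E) ℂ) : Matrix (A × B) (A × B) ℂ :=
  fun x y => ∑ e, ρ (x.1, x.2, e) (y.1, y.2, e)

/-- Quantum conditional mutual information `I(A;B|E) = S(AE)+S(BE)-S(ABE)-S(E)`. -/
def condMutualInfo (ρ : Matrix (A × B × E) (A × B × E) ℂ) : ℝ :=
  vonNeumannEntropy (margAE ρ) + vonNeumannEntropy (margBE ρ)
    - vonNeumannEntropy ρ - vonNeumannEntropy (margE ρ)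

/-- Squashed entanglement: infimum of `(1/2) I(A;B|E)` over all finite-dimensional
extensions of `ρ`. -/
def Esq {A B : Type*} [Fintype A] [Fintype B] (ρ : Matrix (A × B) (A × B) ℂ) : ℝ :=
  sInf { x : ℝ | ∃ (d : ℕ) (ρE : Matrix (A × B × Fin d) (A × B × Fin d) ℂ),
    IsState ρE ∧ margAB ρE = ρ ∧ x = (1 / 2) * condMutualInfo ρE }

/-- Outer product `|ψ⟩⟨ψ|`. -/
def outer {n : Type*} (ψ : n → ℂ) : Matrix n n ℂ :=
  Matrix.vecMulVec ψ (star ψ)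

/-- Trace norm of a Hermitian matrix: sum of the absolute values of its eigenvalues. -/
def traceNorm {n : Type*} [Fintype n] (X : Matrix n n ℂ) : ℝ :=
  if h : X.IsHermitian then ∑ i, |h.eigenvalues i| else 0

/-- Entanglement of formation: infimum of average entanglement entropy over all
finite pure-state ensembles for `ρ`. -/
def EoF {A B : Type*} [Fintype A] [Fintype B] (ρ : Matrix (A × B) (A × B) ℂ) : ℝ :=
  sInf { x : ℝ | ∃ (n : ℕ) (p : Fin n → ℝ) (ψ : Fin n → A × B → ℂ),
    (∀ k, 0 ≤ p k) ∧ (∑ k, p k) = 1 ∧ (∀ k, ∑ i, ‖ψ k i‖ ^ 2 = 1) ∧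
    (∑ k, (p k : ℂ) • outer (ψ k)) = ρ ∧
    x = ∑ k, p k * vonNeumannEntropy (ptraceR (outer (ψ k))) }

/-- The function `η` : `η(x) = -x log₂ x` for `x ≤ 1/4`, `1/2` otherwise. -/
def eta (x : ℝ) : ℝ := if x ≤ 1 / 4 then -(x * Real.logb 2 x) else 1 / 2

/-!
An extension `R` of `ρ` can be written `(√ρ ⊗ 1) C (√ρ ⊗ 1)` with a conditional density operator
`C`, i.e. `C ≥ 0` and `Tr_E C = 1`. Keeping `C` fixed, `(√σ ⊗ 1) C (√σ ⊗ 1)` is an extension of `σ`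
that depends continuously on `σ` and equals `R` at `σ = ρ`. Since the dimension of `E` stays fixed,
`I(A;B|E)` varies continuously along this family, so a near-optimal extension of `ρ` yields nearly
as good extensions of all states close to `ρ`.

Because `Esq` is an infimum of reals, the values `I(A;B|E)` must also be bounded below (the infimum
of an unbounded set is `0`). The bounds `S(ABE) ≤ S(BE) + log₂ |A|` and `S(E) ≤ S(AE) + log₂ |A|`,
which do not involve the dimension of `E`, give `I(A;B|E) ≥ -2 log₂ |A|` without strong
subadditivity.
-/

section PartialTrace

lemma ptraceR_eq_sum_submatrix (X : Matrix (A × B) (A × B) ℂ) :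
    ptraceR X = ∑ b, X.submatrix (·, b) (·, b) := by
  ext i j
  simp [ptraceR, Matrix.sum_apply]

lemma ptraceR_add (X Y : Matrix (A × B) (A × B) ℂ) :
    ptraceR (X + Y) = ptraceR X + ptraceR Y := by
  ext i j
  simp [ptraceR, Finset.sum_add_distrib]

lemma ptraceR_kronecker_one_mul (K : Matrix A A ℂ) (X : Matrix (A × B) (A × B) ℂ) :
    ptraceR ((K ⊗ₖ (1 : Matrix B B ℂ)) * X) = K * ptraceR X := by
  ext i j
  simp only [ptraceR, Matrix.mul_apply, kroneckerMap_apply, Matrix.one_apply, mul_ite, mul_one,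
    mul_zero, ite_mul, zero_mul, Fintype.sum_prod_type, Finset.sum_ite_eq, Finset.mem_univ,
    if_true, Finset.mul_sum]
  exact Finset.sum_comm

lemma ptraceR_mul_kronecker_one (X : Matrix (A × B) (A × B) ℂ) (L : Matrix A A ℂ) :
    ptraceR (X * (L ⊗ₖ (1 : Matrix B B ℂ))) = ptraceR X * L := by
  ext i j
  simp only [ptraceR, Matrix.mul_apply, kroneckerMap_apply, Matrix.one_apply, mul_ite, mul_one,
    mul_zero, Fintype.sum_prod_type, Finset.sum_ite_eq', Finset.mem_univ, if_true, Finset.sum_mul]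
  exact Finset.sum_comm

lemma ptraceR_conj_kronecker_one (K L : Matrix A A ℂ) (X : Matrix (A × B) (A × B) ℂ) :
    ptraceR ((K ⊗ₖ (1 : Matrix B B ℂ)) * X * (L ⊗ₖ (1 : Matrix B B ℂ))) = K * ptraceR X * L := by
  rw [ptraceR_mul_kronecker_one, ptraceR_kronecker_one_mul]

lemma ptraceR_kronecker (Z : Matrix A A ℂ) (N : Matrix B B ℂ) :
    ptraceR (Z ⊗ₖ N) = N.trace • Z := by
  ext i j
  simp [ptraceR, Matrix.trace, Finset.sum_mul, mul_comm (Z i j)]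

lemma trace_ptraceR (X : Matrix (A × B) (A × B) ℂ) : (ptraceR X).trace = X.trace := by
  simp only [Matrix.trace, ptraceR, Matrix.diag, Fintype.sum_prod_type]

lemma posSemidef_ptraceR {X : Matrix (A × B) (A × B) ℂ} (hX : X.PosSemidef) :
    (ptraceR X).PosSemidef := by
  rw [ptraceR_eq_sum_submatrix]
  exact posSemidef_sum _ fun b _ => hX.submatrix _

lemma ptraceL_eq_ptraceR_swap (X : Matrix (A × B) (A × B) ℂ) :
    ptraceL X = ptraceR (X.submatrix (Equiv.prodComm B A) (Equiv.prodComm B A)) :=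
  rfl

lemma ptraceL_conj_one_kronecker (K L : Matrix B B ℂ) (X : Matrix (A × B) (A × B) ℂ) :
    ptraceL (((1 : Matrix A A ℂ) ⊗ₖ K) * X * ((1 : Matrix A A ℂ) ⊗ₖ L)) = K * ptraceL X * L := by
  have swap_kronecker (M : Matrix B B ℂ) :
      ((1 : Matrix A A ℂ) ⊗ₖ M).submatrix (Equiv.prodComm B A) (Equiv.prodComm B A) =
        M ⊗ₖ (1 : Matrix A A ℂ) := by
    ext i j
    simp [Matrix.one_apply, mul_comm]
  rw [ptraceL_eq_ptraceR_swap, ← submatrix_mul_equiv _ _ _ (Equiv.prodComm B A),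
    ← submatrix_mul_equiv _ _ _ (Equiv.prodComm B A), swap_kronecker, swap_kronecker,
    ptraceR_conj_kronecker_one, ← ptraceL_eq_ptraceR_swap]

lemma isHermitian_ptraceL {X : Matrix (A × B) (A × B) ℂ} (hX : X.IsHermitian) :
    (ptraceL X).IsHermitian := by
  ext i j
  simp only [ptraceL, conjTranspose_apply, star_sum, hX.apply]

lemma continuous_ptraceL :
    Continuous (ptraceL : Matrix (A × B) (A × B) ℂ → Matrix B B ℂ) := by
  unfold ptraceL
  fun_prop

lemma IsState.submatrix {m n : Type*} [Fintype m] [Fintype n] {X : Matrix n n ℂ}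
    (hX : IsState X) (e : m ≃ n) : IsState (X.submatrix e e) :=
  ⟨hX.1.submatrix e, hX.2 ▸ e.sum_comp fun i => X i i⟩

lemma IsState.ptraceR {X : Matrix (A × B) (A × B) ℂ} (hX : IsState X) : IsState (ptraceR X) :=
  ⟨posSemidef_ptraceR hX.1, (trace_ptraceR X).trans hX.2⟩

lemma IsState.ptraceL {X : Matrix (A × B) (A × B) ℂ} (hX : IsState X) : IsState (ptraceL X) :=
  (hX.submatrix (Equiv.prodComm B A)).ptraceR

end PartialTrace

section Spectral

variable {n : Type*} [Fintype n] {X : Matrix n n ℂ}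

lemma trace_cfc (hX : X.IsHermitian) (f : ℝ → ℝ) :
    (cfc f X).trace = ∑ i, (f (hX.eigenvalues i) : ℂ) := by
  rw [hX.cfc_eq, Matrix.IsHermitian.cfc, Unitary.conjStarAlgAut_apply, trace_mul_cycle,
    Unitary.coe_star_mul_self, Matrix.one_mul, trace_diagonal]
  rfl

open scoped Matrix.Norms.L2Operator in
lemma continuousOn_cfc_isHermitian {f : ℝ → ℝ} (hf : Continuous f) :
    ContinuousOn (fun X : Matrix n n ℂ => cfc f X) {X | X.IsHermitian} :=
  ContinuousOn.cfc_of_mem_nhdsSet (s := Set.univ) f Filter.univ_mem continuousOn_id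
    (fun _ hX => hX) hf.continuousOn

open scoped Matrix.Norms.L2Operator in
lemma l2_opNorm_le_traceNorm (hX : X.IsHermitian) : ‖X‖ ≤ traceNorm X := by
  rw [traceNorm, dif_pos hX]
  nth_rw 1 [← cfc_id ℝ X hX]
  refine norm_cfc_le (Finset.sum_nonneg fun i _ => abs_nonneg _) fun x hx => ?_
  obtain ⟨i, rfl⟩ := hX.spectrum_real_eq_range_eigenvalues ▸ hx
  exact Finset.single_le_sum (f := fun i => |hX.eigenvalues i|) (fun i _ => abs_nonneg _)
    (Finset.mem_univ i)

open scoped MatrixOrder in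
lemma exists_eq_conjTranspose_mul_self (hX : X.PosSemidef) : ∃ M : Matrix n n ℂ, X = Mᴴ * M :=
  CStarAlgebra.nonneg_iff_eq_star_mul_self.1 hX.nonneg

end Spectral

section Entropy

variable {m n : Type*} [Fintype m] [Fintype n] {X : Matrix n n ℂ}

lemma vonNeumannEntropy_eq_sum_negMulLog (hX : X.IsHermitian) :
    vonNeumannEntropy X = (∑ i, Real.negMulLog (hX.eigenvalues i)) / Real.log 2 := by
  rw [vonNeumannEntropy, dif_pos hX, Finset.sum_div]
  refine Finset.sum_congr rfl fun i _ => ?_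
  rw [Real.negMulLog, Real.logb, neg_mul, neg_div, mul_div_assoc]

lemma vonNeumannEntropy_eq_trace_cfc (hX : X.IsHermitian) :
    vonNeumannEntropy X = (cfc Real.negMulLog X).trace.re / Real.log 2 := by
  rw [vonNeumannEntropy_eq_sum_negMulLog hX, trace_cfc hX, Complex.re_sum]
  simp only [Complex.ofReal_re]

lemma continuousOn_vonNeumannEntropy :
    ContinuousOn (vonNeumannEntropy : Matrix n n ℂ → ℝ) {X | X.IsHermitian} := by
  have trace_cont : Continuous fun Y : Matrix n n ℂ => Y.trace.re / Real.log 2 := by fun_prop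
  have cfc_cont := continuousOn_cfc_isHermitian (n := n) Real.continuous_negMulLog
  exact (trace_cont.comp_continuousOn cfc_cont).congr fun X hX => vonNeumannEntropy_eq_trace_cfc hX

lemma vonNeumannEntropy_eq_sum_roots_charpoly (hX : X.IsHermitian) :
    vonNeumannEntropy X =
      (X.charpoly.roots.map fun z => Real.negMulLog z.re).sum / Real.log 2 := by
  rw [vonNeumannEntropy_eq_sum_negMulLog hX, hX.roots_charpoly_eq_eigenvalues, Multiset.map_map]
  simp [Function.comp_def]

lemma vonNeumannEntropy_conjTranspose_mul_self (L : Matrix m n ℂ) :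
    vonNeumannEntropy (Lᴴ * L) = vonNeumannEntropy (L * Lᴴ) := by
  have roots_eq := congrArg
    (fun p : Polynomial ℂ => (p.roots.map fun z => Real.negMulLog z.re).sum)
    (charpoly_mul_comm' L Lᴴ)
  rw [Polynomial.roots_mul ((Polynomial.monic_X_pow _).mul (charpoly_monic _)).ne_zero,
    Polynomial.roots_mul ((Polynomial.monic_X_pow _).mul (charpoly_monic _)).ne_zero] at roots_eq
  rw [vonNeumannEntropy_eq_sum_roots_charpoly (isHermitian_conjTranspose_mul_self L),
    vonNeumannEntropy_eq_sum_roots_charpoly (isHermitian_mul_conjTranspose_self L)]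
  congr 1
  -- The factors `X ^ k` contribute only roots `0`, where `negMulLog` vanishes.
  simpa [Multiset.map_nsmul, Multiset.sum_nsmul] using roots_eq.symm

lemma vonNeumannEntropy_conj_unitary (hX : X.IsHermitian) {U : Matrix n n ℂ}
    (hU : U * Uᴴ = 1) : vonNeumannEntropy (Uᴴ * X * U) = vonNeumannEntropy X := by
  rw [vonNeumannEntropy_eq_sum_roots_charpoly hX,
    vonNeumannEntropy_eq_sum_roots_charpoly (isHermitian_conjTranspose_mul_mul U hX),
    charpoly_mul_comm, ← Matrix.mul_assoc, hU, Matrix.one_mul]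

lemma of_norm_sq_mem_doublyStochastic {U : Matrix n n ℂ} (hU : U ∈ unitaryGroup n ℂ) :
    (of fun i j => ‖U i j‖ ^ 2) ∈ doublyStochastic ℝ n := by
  refine mem_doublyStochastic_iff_sum.2 ⟨fun i j => sq_nonneg _, fun i => ?_, fun j => ?_⟩
  · have row := congrFun (congrFun (mem_unitaryGroup_iff.1 hU) i) i
    simp only [Matrix.mul_apply, star_apply, RCLike.star_def, Complex.mul_conj',
      Matrix.one_apply_eq] at row
    exact_mod_cast row
  · have col := congrFun (congrFun (mem_unitaryGroup_iff'.1 hU) j) j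
    simp only [Matrix.mul_apply, star_apply, RCLike.star_def, Complex.conj_mul',
      Matrix.one_apply_eq] at col
    exact_mod_cast col

lemma sum_le_sum_mulVec_of_concaveOn {s : Set ℝ} {f : ℝ → ℝ} (hf : ConcaveOn ℝ s f)
    {D : Matrix n n ℝ} (hD : D ∈ doublyStochastic ℝ n) {x : n → ℝ} (hx : ∀ j, x j ∈ s) :
    ∑ j, f (x j) ≤ ∑ i, f ((D *ᵥ x) i) :=
  calc ∑ j, f (x j) = ∑ j, (∑ i, D i j) * f (x j) := by
        simp only [sum_col_of_mem_doublyStochastic hD, one_mul]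
    _ = ∑ i, ∑ j, D i j * f (x j) := by
        simp only [Finset.sum_mul]
        exact Finset.sum_comm
    _ ≤ ∑ i, f ((D *ᵥ x) i) := Finset.sum_le_sum fun i _ =>
        hf.le_map_sum (fun j _ => nonneg_of_mem_doublyStochastic hD)
          (sum_row_of_mem_doublyStochastic hD i) fun j _ => hx j

lemma re_diag_eq_mulVec_eigenvalues (hX : X.IsHermitian) (i : n) :
    (X i i).re =
      ((of fun i j => ‖(hX.eigenvectorUnitary : Matrix n n ℂ) i j‖ ^ 2) *ᵥ hX.eigenvalues) i := by
  have diag := congrFun (congrFun hX.spectral_theorem i) i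
  rw [Unitary.conjStarAlgAut_apply, Matrix.mul_apply] at diag
  simp only [diag, Complex.re_sum, mulVec, dotProduct, of_apply]
  refine Finset.sum_congr rfl fun j _ => ?_
  rw [Matrix.mul_diagonal, star_apply, mul_right_comm, RCLike.star_def, Complex.mul_conj',
    Function.comp_apply]
  rw [← Complex.ofReal_pow]
  exact Complex.re_ofReal_mul _ _

lemma vonNeumannEntropy_le_sum_negMulLog_diag (hX : X.PosSemidef) :
    vonNeumannEntropy X ≤ (∑ i, Real.negMulLog (X i i).re) / Real.log 2 := by
  rw [vonNeumannEntropy_eq_sum_negMulLog hX.1]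
  simp only [re_diag_eq_mulVec_eigenvalues hX.1]
  gcongr ?_ / _
  exact sum_le_sum_mulVec_of_concaveOn Real.concaveOn_negMulLog
    (of_norm_sq_mem_doublyStochastic hX.1.eigenvectorUnitary.2) hX.eigenvalues_nonneg

lemma sum_negMulLog_le {ι : Type*} [Fintype ι] {p : ι → ℝ} (hp : ∀ i, 0 ≤ p i) :
    ∑ i, Real.negMulLog (p i) ≤
      Real.negMulLog (∑ i, p i) + (∑ i, p i) * Real.log (Fintype.card ι) := by
  cases isEmpty_or_nonempty ι
  · simp
  have card_pos : (0 : ℝ) < Fintype.card ι := by exact_mod_cast Fintype.card_pos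
  have jensen := Real.concaveOn_negMulLog.le_map_sum (t := Finset.univ)
    (w := fun _ : ι => (Fintype.card ι : ℝ)⁻¹) (p := p) (fun _ _ => by positivity)
    (by simp [card_pos.ne']) fun i _ => hp i
  simp only [smul_eq_mul, ← Finset.mul_sum] at jensen
  rw [inv_mul_le_iff₀ card_pos, Real.negMulLog_mul, Real.negMulLog, Real.log_inv] at jensen
  refine jensen.trans_eq ?_
  field_simp
  ring

end Entropy

section DimensionBounds

variable {X : Matrix (A × B) (A × B) ℂ}

lemma sum_negMulLog_diag_le (hX : IsState X) :
    ∑ x, Real.negMulLog (X x x).re ≤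
      ∑ b, Real.negMulLog (ptraceL X b b).re + Real.log (Fintype.card A) := by
  have diag_sum (b : B) : ∑ a, (X (a, b) (a, b)).re = (ptraceL X b b).re :=
    (Complex.re_sum _ _).symm
  have trace_one : ∑ b, (ptraceL X b b).re = 1 := by
    have := congrArg Complex.re hX.ptraceL.2
    simpa [Matrix.trace] using this
  calc ∑ x, Real.negMulLog (X x x).re
      = ∑ b, ∑ a, Real.negMulLog (X (a, b) (a, b)).re := by
        rw [Fintype.sum_prod_type, Finset.sum_comm]
    _ ≤ ∑ b, (Real.negMulLog (ptraceL X b b).re +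
          (ptraceL X b b).re * Real.log (Fintype.card A)) := by
        refine Finset.sum_le_sum fun b _ => ?_
        rw [← diag_sum b]
        exact sum_negMulLog_le fun a => (Complex.nonneg_iff.1 hX.1.diag_nonneg).1
    _ = ∑ b, Real.negMulLog (ptraceL X b b).re + Real.log (Fintype.card A) := by
        rw [Finset.sum_add_distrib, ← Finset.sum_mul, trace_one, one_mul]

lemma vonNeumannEntropy_le_ptraceL_add (hX : IsState X) :
    vonNeumannEntropy X ≤ vonNeumannEntropy (ptraceL X) + Real.logb 2 (Fintype.card A) := by
  -- Rotating `B` so that the marginal is diagonal reduces the claim to the diagonal of `X`.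
  have hP := hX.ptraceL.1.1
  set V : Matrix B B ℂ := ↑hP.eigenvectorUnitary
  set W : Matrix (A × B) (A × B) ℂ := (1 : Matrix A A ℂ) ⊗ₖ V with hW
  have W_conjTranspose : Wᴴ = (1 : Matrix A A ℂ) ⊗ₖ Vᴴ := by
    rw [hW, conjTranspose_kronecker, conjTranspose_one]
  have W_unitary : W * Wᴴ = 1 := by
    have V_unitary : V * Vᴴ = 1 := Unitary.coe_mul_star_self hP.eigenvectorUnitary
    rw [W_conjTranspose, hW, ← mul_kronecker_mul, V_unitary, Matrix.one_mul, one_kronecker_one]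
  have marginal_diagonal : ptraceL (Wᴴ * X * W) = diagonal (RCLike.ofReal ∘ hP.eigenvalues) := by
    rw [W_conjTranspose, hW, ptraceL_conj_one_kronecker,
      ← hP.conjStarAlgAut_star_eigenvectorUnitary, Unitary.conjStarAlgAut_star_apply,
      star_eq_conjTranspose]
  have rotated_state : IsState (Wᴴ * X * W) :=
    ⟨hX.1.conjTranspose_mul_mul_same W, by
      rw [trace_mul_comm, ← Matrix.mul_assoc, W_unitary, Matrix.one_mul, hX.2]⟩
  calc vonNeumannEntropy X
      = vonNeumannEntropy (Wᴴ * X * W) := by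
        rw [vonNeumannEntropy_conj_unitary hX.1.1 (by convert W_unitary)]
    _ ≤ (∑ x, Real.negMulLog ((Wᴴ * X * W) x x).re) / Real.log 2 :=
        vonNeumannEntropy_le_sum_negMulLog_diag rotated_state.1
    _ ≤ (∑ b, Real.negMulLog (hP.eigenvalues b) + Real.log (Fintype.card A)) / Real.log 2 := by
        have := sum_negMulLog_diag_le rotated_state
        simp only [marginal_diagonal, diagonal_apply_eq] at this
        gcongr
        exact this
    _ = vonNeumannEntropy (ptraceL X) + Real.logb 2 (Fintype.card A) := by
        rw [vonNeumannEntropy_eq_sum_negMulLog hP, add_div, Real.logb]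

lemma vonNeumannEntropy_ptraceL_le_add (hX : IsState X) :
    vonNeumannEntropy (ptraceL X) ≤ vonNeumannEntropy X + Real.logb 2 (Fintype.card A) := by
  obtain ⟨M, hM⟩ := exists_eq_conjTranspose_mul_self hX.1
  -- Regrouping the row index of `A` with the column index of `M` exchanges the two marginals.
  let L : Matrix (A × A × B) B ℂ := of fun x b => M x.2 (x.1, b)
  have marginal_eq : ptraceL X = Lᴴ * L := by
    ext i j
    simp [L, hM, ptraceL, Matrix.mul_apply, Fintype.sum_prod_type]
  have complement_eq : ptraceL (L * Lᴴ) = M * Mᴴ := by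
    ext i j
    simp [L, ptraceL, Matrix.mul_apply, Fintype.sum_prod_type]
  have complement_state : IsState (L * Lᴴ) :=
    ⟨posSemidef_self_mul_conjTranspose L, by
      rw [trace_mul_comm, ← marginal_eq, hX.ptraceL.2]⟩
  calc vonNeumannEntropy (ptraceL X)
      = vonNeumannEntropy (L * Lᴴ) := by
        rw [marginal_eq, vonNeumannEntropy_conjTranspose_mul_self]
    _ ≤ vonNeumannEntropy (ptraceL (L * Lᴴ)) + Real.logb 2 (Fintype.card A) :=
        vonNeumannEntropy_le_ptraceL_add complement_state
    _ = vonNeumannEntropy X + Real.logb 2 (Fintype.card A) := by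
        rw [complement_eq, hM, vonNeumannEntropy_conjTranspose_mul_self]

end DimensionBounds

section ConditionalState

/-- A conditional density operator on `B` given `A`: a positive semidefinite `C` with
`Tr_B C = 1`, the quantum analogue of a conditional probability distribution. -/
def IsConditionalState (C : Matrix (A × B) (A × B) ℂ) : Prop :=
  C.PosSemidef ∧ ptraceR C = 1

/-- The joint operator `(√σ ⊗ 1) C (√σ ⊗ 1)` with first marginal `σ` and conditional density
operator `C`. -/
def jointState (C : Matrix (A × B) (A × B) ℂ) (σ : Matrix A A ℂ) : Matrix (A × B) (A × B) ℂ :=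
  (cfc Real.sqrt σ ⊗ₖ (1 : Matrix B B ℂ)) * C * (cfc Real.sqrt σ ⊗ₖ (1 : Matrix B B ℂ))

/-- The square root `ρ^{-1/2}` of the pseudo-inverse of `ρ`; since `(√0)⁻¹ = 0`, it vanishes on the
kernel of `ρ`. -/
def pinvSqrt {n : Type*} [Fintype n] (ρ : Matrix n n ℂ) : Matrix n n ℂ :=
  cfc (fun x : ℝ => (√x)⁻¹) ρ

/-- The conditional density operator `(ρ^{-1/2} ⊗ 1) R (ρ^{-1/2} ⊗ 1)` of `R`, where `ρ = Tr_B R`;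
on the kernel of `ρ`, where this vanishes, it is completed by the pure state at `b`. -/
def conditionalState (R : Matrix (A × B) (A × B) ℂ) (b : B) : Matrix (A × B) (A × B) ℂ :=
  (pinvSqrt (ptraceR R) ⊗ₖ (1 : Matrix B B ℂ)) * R * (pinvSqrt (ptraceR R) ⊗ₖ (1 : Matrix B B ℂ)) +
    (1 - pinvSqrt (ptraceR R) * ptraceR R * pinvSqrt (ptraceR R)) ⊗ₖ Matrix.single b b 1

variable {n : Type*} [Fintype n] {ρ : Matrix n n ℂ}

lemma continuousOn_spectrum (f : ℝ → ℝ) : ContinuousOn f (spectrum ℝ ρ) :=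
  ρ.finite_real_spectrum.continuousOn f

lemma isHermitian_cfc (f : ℝ → ℝ) : (cfc f ρ).IsHermitian :=
  cfc_predicate f ρ

lemma nonneg_of_mem_spectrum (hρ : ρ.PosSemidef) {x : ℝ} (hx : x ∈ spectrum ℝ ρ) : 0 ≤ x := by
  obtain ⟨i, rfl⟩ := hρ.1.spectrum_real_eq_range_eigenvalues ▸ hx
  exact hρ.eigenvalues_nonneg i

lemma cfc_sqrt_mul_cfc_sqrt (hρ : ρ.PosSemidef) : cfc Real.sqrt ρ * cfc Real.sqrt ρ = ρ := by
  rw [← cfc_mul _ _ ρ (continuousOn_spectrum _) (continuousOn_spectrum _)]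
  exact (cfc_congr (g := id) fun x hx =>
    Real.mul_self_sqrt (nonneg_of_mem_spectrum hρ hx)).trans (cfc_id ℝ ρ hρ.1.isSelfAdjoint)

lemma cfc_sqrt_mul_pinvSqrt_mul (hρ : ρ.PosSemidef) : cfc Real.sqrt ρ * pinvSqrt ρ * ρ = ρ := by
  have key : Set.EqOn (fun x : ℝ => √x * (√x)⁻¹ * id x) id (spectrum ℝ ρ) := fun x hx => by
    rcases (nonneg_of_mem_spectrum hρ hx).eq_or_lt with rfl | hpos
    · simp
    · simp [Real.sqrt_eq_zero', hpos]
  have ρ_eq := cfc_id ℝ ρ hρ.1.isSelfAdjoint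
  calc cfc Real.sqrt ρ * pinvSqrt ρ * ρ
      = cfc Real.sqrt ρ * cfc (fun x : ℝ => (√x)⁻¹) ρ * cfc id ρ := by rw [ρ_eq, pinvSqrt]
    _ = cfc (fun x : ℝ => √x * (√x)⁻¹ * id x) ρ := by
        rw [← cfc_mul _ _ ρ (continuousOn_spectrum _) (continuousOn_spectrum _),
          ← cfc_mul _ _ ρ (continuousOn_spectrum _) (continuousOn_spectrum _)]
    _ = ρ := (cfc_congr key).trans ρ_eq

lemma mul_pinvSqrt_mul_cfc_sqrt (hρ : ρ.PosSemidef) : ρ * (pinvSqrt ρ * cfc Real.sqrt ρ) = ρ := by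
  have h := congrArg conjTranspose (cfc_sqrt_mul_pinvSqrt_mul hρ)
  rwa [conjTranspose_mul, conjTranspose_mul, hρ.1.eq, pinvSqrt, (isHermitian_cfc _).eq,
    (isHermitian_cfc _).eq] at h

open scoped MatrixOrder in
lemma posSemidef_one_sub_pinvSqrt_mul_mul (hρ : ρ.PosSemidef) :
    (1 - pinvSqrt ρ * ρ * pinvSqrt ρ).PosSemidef := by
  have key : ∀ x ∈ spectrum ℝ ρ, (√x)⁻¹ * id x * (√x)⁻¹ ≤ 1 := fun x hx => by
    have hx := nonneg_of_mem_spectrum hρ hx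
    calc (√x)⁻¹ * x * (√x)⁻¹ = x / (√x * √x) := by ring
      _ ≤ 1 := by
        rw [Real.mul_self_sqrt hx]
        exact div_self_le_one x
  have conj_eq : pinvSqrt ρ * ρ * pinvSqrt ρ =
      cfc (fun x : ℝ => (√x)⁻¹ * id x * (√x)⁻¹) ρ := by
    rw [cfc_mul _ _ ρ (continuousOn_spectrum _) (continuousOn_spectrum _),
      cfc_mul _ _ ρ (continuousOn_spectrum _) (continuousOn_spectrum _),
      cfc_id ℝ ρ hρ.1.isSelfAdjoint, pinvSqrt]
  rw [← le_iff, conj_eq]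
  exact cfc_le_one _ _ key

lemma kronecker_one_mul_eq_zero {K : Matrix A A ℂ} {R : Matrix (A × B) (A × B) ℂ}
    (hR : R.PosSemidef) (hK : K * ptraceR R = 0) : (K ⊗ₖ (1 : Matrix B B ℂ)) * R = 0 := by
  obtain ⟨M, hM⟩ := exists_eq_conjTranspose_mul_self hR
  suffices h : (K ⊗ₖ (1 : Matrix B B ℂ)) * Mᴴ = 0 by
    rw [hM, ← Matrix.mul_assoc, h, Matrix.zero_mul]
  rw [← trace_mul_conjTranspose_self_eq_zero_iff]
  calc (((K ⊗ₖ (1 : Matrix B B ℂ)) * Mᴴ) * ((K ⊗ₖ (1 : Matrix B B ℂ)) * Mᴴ)ᴴ).trace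
      = ((K ⊗ₖ (1 : Matrix B B ℂ)) * R * (Kᴴ ⊗ₖ (1 : Matrix B B ℂ))).trace := by
        simp only [conjTranspose_mul, conjTranspose_conjTranspose, conjTranspose_kronecker,
          conjTranspose_one, hM, Matrix.mul_assoc]
    _ = 0 := by
        rw [← trace_ptraceR, ptraceR_conj_kronecker_one, hK, Matrix.zero_mul, trace_zero]

lemma kronecker_one_mul_eq_self {K : Matrix A A ℂ} {R : Matrix (A × B) (A × B) ℂ}
    (hR : R.PosSemidef) (hK : K * ptraceR R = ptraceR R) :
    (K ⊗ₖ (1 : Matrix B B ℂ)) * R = R := by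
  have split : (1 - K) ⊗ₖ (1 : Matrix B B ℂ) + K ⊗ₖ (1 : Matrix B B ℂ) = 1 := by
    rw [← add_kronecker, sub_add_cancel, one_kronecker_one]
  have complement : (1 - K) ⊗ₖ (1 : Matrix B B ℂ) * R = 0 :=
    kronecker_one_mul_eq_zero hR (by rw [Matrix.sub_mul, Matrix.one_mul, hK, sub_self])
  rw [← zero_add (_ * R), ← complement, ← Matrix.add_mul, split, Matrix.one_mul]

lemma mul_kronecker_one_eq_self {K : Matrix A A ℂ} {R : Matrix (A × B) (A × B) ℂ}
    (hR : R.PosSemidef) (hK : ptraceR R * K = ptraceR R) :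
    R * (K ⊗ₖ (1 : Matrix B B ℂ)) = R := by
  have hK' := congrArg conjTranspose hK
  rw [conjTranspose_mul, (posSemidef_ptraceR hR).1.eq] at hK'
  have h := congrArg conjTranspose (kronecker_one_mul_eq_self hR hK')
  rwa [conjTranspose_mul, hR.1.eq, conjTranspose_kronecker, conjTranspose_one,
    conjTranspose_conjTranspose] at h

lemma posSemidef_single {ι : Type*} (i : ι) : (Matrix.single i i (1 : ℂ)).PosSemidef := by
  rw [← diagonal_single]
  exact PosSemidef.diagonal (Pi.single_nonneg.2 zero_le_one)

lemma ptraceR_jointState {C : Matrix (A × B) (A × B) ℂ} (hC : IsConditionalState C)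
    {σ : Matrix A A ℂ} (hσ : σ.PosSemidef) : ptraceR (jointState C σ) = σ := by
  rw [jointState, ptraceR_conj_kronecker_one, hC.2, Matrix.mul_one, cfc_sqrt_mul_cfc_sqrt hσ]

lemma isState_jointState {C : Matrix (A × B) (A × B) ℂ} (hC : IsConditionalState C)
    {σ : Matrix A A ℂ} (hσ : IsState σ) : IsState (jointState C σ) := by
  refine ⟨?_, by rw [← trace_ptraceR, ptraceR_jointState hC hσ.1, hσ.2]⟩
  have h := hC.1.mul_mul_conjTranspose_same (cfc Real.sqrt σ ⊗ₖ (1 : Matrix B B ℂ))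
  rwa [conjTranspose_kronecker, conjTranspose_one, (isHermitian_cfc _).eq] at h

lemma continuousOn_jointState (C : Matrix (A × B) (A × B) ℂ) :
    ContinuousOn (jointState C) {σ | σ.IsHermitian} := by
  have kronecker_cont : Continuous fun K : Matrix A A ℂ => K ⊗ₖ (1 : Matrix B B ℂ) :=
    continuous_matrix fun i j => (continuous_id.matrix_elem _ _).mul continuous_const
  have sqrt_cont := kronecker_cont.comp_continuousOn
    (continuousOn_cfc_isHermitian Real.continuous_sqrt)
  exact (sqrt_cont.mul continuousOn_const).mul sqrt_cont

lemma isConditionalState_conditionalState {R : Matrix (A × B) (A × B) ℂ} (hR : R.PosSemidef)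
    (b : B) : IsConditionalState (conditionalState R b) := by
  constructor
  · have h := hR.mul_mul_conjTranspose_same (pinvSqrt (ptraceR R) ⊗ₖ (1 : Matrix B B ℂ))
    rw [conjTranspose_kronecker, conjTranspose_one, pinvSqrt, (isHermitian_cfc _).eq] at h
    exact h.add ((posSemidef_one_sub_pinvSqrt_mul_mul (posSemidef_ptraceR hR)).kronecker
      (posSemidef_single b))
  · rw [conditionalState, ptraceR_add, ptraceR_conj_kronecker_one, ptraceR_kronecker,
      trace_single_eq_same, one_smul, add_sub_cancel]

lemma jointState_conditionalState {R : Matrix (A × B) (A × B) ℂ} (hR : R.PosSemidef) (b : B) :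
    jointState (conditionalState R b) (ptraceR R) = R := by
  have hρ := posSemidef_ptraceR hR
  have sq_mul := kronecker_one_mul_eq_self hR (cfc_sqrt_mul_pinvSqrt_mul hρ)
  have mul_qs := mul_kronecker_one_eq_self hR (mul_pinvSqrt_mul_cfc_sqrt hρ)
  rw [jointState, conditionalState]
  set ρ := ptraceR R
  set s := cfc Real.sqrt ρ
  set q := pinvSqrt ρ
  have completion_eq_zero : s * (1 - q * ρ * q) * s = 0 := by
    rw [Matrix.mul_sub, Matrix.sub_mul, Matrix.mul_one, sub_eq_zero]
    calc s * s = (s * q * ρ) * (q * s) := by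
          rw [cfc_sqrt_mul_pinvSqrt_mul hρ, mul_pinvSqrt_mul_cfc_sqrt hρ, cfc_sqrt_mul_cfc_sqrt hρ]
      _ = s * (q * ρ * q) * s := by noncomm_ring
  calc s ⊗ₖ 1 * (q ⊗ₖ 1 * R * q ⊗ₖ 1 + (1 - q * ρ * q) ⊗ₖ Matrix.single b b 1) * s ⊗ₖ 1
      = (s ⊗ₖ 1 * q ⊗ₖ 1) * R * (q ⊗ₖ 1 * s ⊗ₖ 1) +
          s ⊗ₖ 1 * (1 - q * ρ * q) ⊗ₖ Matrix.single b b 1 * s ⊗ₖ (1 : Matrix B B ℂ) := by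
        simp only [Matrix.mul_add, Matrix.add_mul, Matrix.mul_assoc]
    _ = (s * q) ⊗ₖ 1 * R * (q * s) ⊗ₖ 1 +
          (s * (1 - q * ρ * q) * s) ⊗ₖ Matrix.single b b 1 := by
        simp only [← mul_kronecker_mul, Matrix.one_mul, Matrix.mul_one]
    _ = R := by rw [sq_mul, mul_qs, completion_eq_zero, zero_kronecker, add_zero]

end ConditionalState

section SquashedEntanglement

lemma margAB_eq_ptraceR (X : Matrix (A × B × E) (A × B × E) ℂ) :
    margAB X = ptraceR (X.submatrix (Equiv.prodAssoc A B E) (Equiv.prodAssoc A B E)) :=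
  rfl

/-- The rearrangement of the factors `B`, `A`, `E` as `A`, `B`, `E`, which brings `B` to the left to
be traced out by `ptraceL`. -/
def prodLeftComm (A B E : Type*) : B × A × E ≃ A × B × E where
  toFun x := (x.2.1, x.1, x.2.2)
  invFun x := (x.2.1, x.1, x.2.2)

lemma condMutualInfo_eq_ptraceL (X : Matrix (A × B × E) (A × B × E) ℂ) :
    condMutualInfo X =
      vonNeumannEntropy (ptraceL (X.submatrix (prodLeftComm A B E) (prodLeftComm A B E))) +
        vonNeumannEntropy (ptraceL X) - vonNeumannEntropy X -
        vonNeumannEntropy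
          (ptraceL (ptraceL (X.submatrix (prodLeftComm A B E) (prodLeftComm A B E)))) :=
  rfl

lemma continuousOn_condMutualInfo :
    ContinuousOn (condMutualInfo : Matrix (A × B × E) (A × B × E) ℂ → ℝ) {X | X.IsHermitian} := by
  have margAE_cont : Continuous fun X : Matrix (A × B × E) (A × B × E) ℂ =>
      ptraceL (X.submatrix (prodLeftComm A B E) (prodLeftComm A B E)) :=
    continuous_ptraceL.comp (continuous_id.matrix_submatrix _ _)
  have margAE_herm (X : Matrix (A × B × E) (A × B × E) ℂ) (hX : X.IsHermitian) :=
    isHermitian_ptraceL (hX.submatrix (prodLeftComm A B E))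
  have S_AE := continuousOn_vonNeumannEntropy.comp margAE_cont.continuousOn margAE_herm
  have S_BE := continuousOn_vonNeumannEntropy.comp continuous_ptraceL.continuousOn
    fun (X : Matrix (A × B × E) (A × B × E) ℂ) => isHermitian_ptraceL
  have S_E := continuousOn_vonNeumannEntropy.comp
    (continuous_ptraceL.comp margAE_cont).continuousOn
    fun X hX => isHermitian_ptraceL (margAE_herm X hX)
  exact (((S_AE.add S_BE).sub continuousOn_vonNeumannEntropy).sub S_E).congr
    fun X _ => condMutualInfo_eq_ptraceL X

lemma neg_two_mul_logb_card_le_condMutualInfo {X : Matrix (A × B × E) (A × B × E) ℂ}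
    (hX : IsState X) : -(2 * Real.logb 2 (Fintype.card A)) ≤ condMutualInfo X := by
  have add_A := vonNeumannEntropy_le_ptraceL_add hX
  have remove_A := vonNeumannEntropy_ptraceL_le_add (hX.submatrix (prodLeftComm A B E)).ptraceL
  rw [condMutualInfo_eq_ptraceL]
  linarith

/-- The values `I(A;B|E) / 2` over all extensions of `ρ`, whose infimum is `Esq ρ`. -/
def extensionValues (ρ : Matrix (A × B) (A × B) ℂ) : Set ℝ :=
  {x | ∃ (d : ℕ) (R : Matrix (A × B × Fin d) (A × B × Fin d) ℂ),
    IsState R ∧ margAB R = ρ ∧ x = (1 / 2) * condMutualInfo R}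

lemma extensionValues_nonempty {ρ : Matrix (A × B) (A × B) ℂ} (hρ : IsState ρ) :
    (extensionValues ρ).Nonempty := by
  let dropTrivial : A × B × Fin 1 ≃ A × B :=
    (Equiv.prodAssoc A B (Fin 1)).symm.trans (Equiv.prodUnique _ _)
  refine ⟨_, 1, ρ.submatrix dropTrivial dropTrivial, hρ.submatrix dropTrivial, ?_, rfl⟩
  ext i j
  simp [margAB, dropTrivial]

lemma bddBelow_extensionValues (ρ : Matrix (A × B) (A × B) ℂ) : BddBelow (extensionValues ρ) := by
  refine ⟨-Real.logb 2 (Fintype.card A), ?_⟩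
  rintro _ ⟨d, R, hR, -, rfl⟩
  linarith [neg_two_mul_logb_card_le_condMutualInfo hR]

lemma Esq_le {d : ℕ} {R : Matrix (A × B × Fin d) (A × B × Fin d) ℂ} (hR : IsState R) :
    Esq (margAB R) ≤ (1 / 2) * condMutualInfo R :=
  csInf_le (bddBelow_extensionValues _) ⟨d, R, hR, rfl, rfl⟩

lemma exists_continuousOn_extension {R : Matrix (A × B × E) (A × B × E) ℂ} (hR : IsState R) :
    ∃ F : Matrix (A × B) (A × B) ℂ → Matrix (A × B × E) (A × B × E) ℂ,
      ContinuousOn F {σ | IsState σ} ∧ (∀ σ, IsState σ → IsState (F σ) ∧ margAB (F σ) = σ) ∧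
        F (margAB R) = R := by
  let assoc := Equiv.prodAssoc A B E
  have state_R' : IsState (R.submatrix assoc assoc) := hR.submatrix assoc
  obtain ⟨e⟩ : Nonempty E := by
    by_contra! _
    simpa [Matrix.trace] using hR.2
  let C := conditionalState (R.submatrix assoc assoc) e
  have hC : IsConditionalState C := isConditionalState_conditionalState state_R'.1 e
  refine ⟨fun σ => (jointState C σ).submatrix assoc.symm assoc.symm, ?_, fun σ hσ => ⟨?_, ?_⟩, ?_⟩
  · exact (continuous_id.matrix_submatrix _ _).comp_continuousOn
      ((continuousOn_jointState C).mono fun σ hσ => hσ.1.1)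
  · exact (isState_jointState hC hσ).submatrix assoc.symm
  · exact ptraceR_jointState hC hσ.1
  · dsimp only
    rw [margAB_eq_ptraceR, jointState_conditionalState state_R'.1]
    rfl

theorem upperSemicontinuousOn_Esq :
    UpperSemicontinuousOn (Esq : Matrix (A × B) (A × B) ℂ → ℝ) {ρ | IsState ρ} := by
  intro ρ hρ c hc
  obtain ⟨_, ⟨d, R, hR, rfl, rfl⟩, hRc⟩ := exists_lt_of_csInf_lt (extensionValues_nonempty hρ) hc
  obtain ⟨F, F_cont, F_extends, F_self⟩ := exists_continuousOn_extension hR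
  have value_cont : ContinuousOn (fun σ => (1 / 2) * condMutualInfo (F σ)) {σ | IsState σ} :=
    continuousOn_const.mul (continuousOn_condMutualInfo.comp F_cont
      fun σ hσ => (F_extends σ hσ).1.1.1)
  have value_lt : (1 / 2) * condMutualInfo (F (margAB R)) < c := by rwa [F_self]
  filter_upwards [(value_cont _ hρ).eventually_lt_const value_lt, self_mem_nhdsWithin]
    with σ hσc hσ
  obtain ⟨state_F, marginal_F⟩ := F_extends σ hσ
  calc Esq σ = Esq (margAB (F σ)) := by rw [marginal_F]
    _ ≤ (1 / 2) * condMutualInfo (F σ) := Esq_le state_F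
    _ < c := hσc

open scoped Matrix.Norms.L2Operator in
lemma exists_traceNorm_lt_of_eventually {n : Type*} [Fintype n] {ρ : Matrix n n ℂ}
    (hρ : IsState ρ) {p : Matrix n n ℂ → Prop} (hp : ∀ᶠ σ in nhdsWithin ρ {σ | IsState σ}, p σ) :
    ∃ δ > (0 : ℝ), ∀ σ, IsState σ → traceNorm (ρ - σ) < δ → p σ := by
  obtain ⟨δ, δ_pos, ball_subset⟩ := Metric.mem_nhdsWithin_iff.1 hp
  refine ⟨δ, δ_pos, fun σ hσ hδ => ball_subset ⟨?_, hσ⟩⟩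
  rw [Metric.mem_ball, dist_comm, dist_eq_norm]
  exact (l2_opNorm_le_traceNorm (hρ.1.1.sub hσ.1.1)).trans_lt hδ

end SquashedEntanglement

/-- Squashed entanglement is upper semicontinuous on the set of states:
for every state `ρ` and every `c > E_sq(ρ)`, there is a trace-norm neighbourhood of `ρ`
within the set of states on which `E_sq < c`. -/
theorem squashedEntanglement_upperSemicontinuous
    {A B : Type*} [Fintype A] [Fintype B]
    (ρ : Matrix (A × B) (A × B) ℂ) (hρ : IsState ρ)
    (c : ℝ) (hc : Esq ρ < c) :
    ∃ δ > (0 : ℝ), ∀ σ : Matrix (A × B) (A × B) ℂ,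
      IsState σ → traceNorm (ρ - σ) < δ → Esq σ < c :=
  exists_traceNorm_lt_of_eventually hρ (upperSemicontinuousOn_Esq ρ hρ c hc)

end
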